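/- Let f : ℂ → ℂ be a nonconstant holomorphic (entire) function, and define h(z) = |f′(z)|²·(1 + |f(z)|²·u(|f(z)|²)²) + 1 on ℂ∖f⁻¹(0), with K the Gaussian curvature of h(z)|dz|². If p ∈ ℂ satisfies f(p) ≠ 0 and f′(p) = 0, then K(p) = −2·|f″(p)|²·(1 + |f(p)|²·u(|f(p)|²)²); in particular, K(p) = 0 if and only if f″(p) = 0. -/

import Mathlib

open Complex Filter Topology Metric
open scoped ComplexOrder

/-- The function `u(t) = (t-1)/(t log t)` for `t ≠ 1`, extended by `u(1) = 1`. -/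
noncomputable def u (t : ℝ) : ℝ := if t = 1 then 1 else (t - 1) / (t * Real.log t)

/-- Wirtinger derivative `∂g` of a complex-valued function on `ℂ` (real-differentiable sense). -/
noncomputable def wdz (g : ℂ → ℂ) (z : ℂ) : ℂ :=
  (fderiv ℝ g z 1 - Complex.I * fderiv ℝ g z Complex.I) / 2

/-- Wirtinger derivative `∂̄g` of a complex-valued function on `ℂ`. -/
noncomputable def wdzbar (g : ℂ → ℂ) (z : ℂ) : ℂ :=
  (fderiv ℝ g z 1 + Complex.I * fderiv ℝ g z Complex.I) / 2

/-- `∂h` for a real-valued `h`. -/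
noncomputable def wdzR (h : ℂ → ℝ) : ℂ → ℂ := wdz fun w => (h w : ℂ)

/-- `∂̄h` for a real-valued `h`. -/
noncomputable def wdzbarR (h : ℂ → ℝ) : ℂ → ℂ := wdzbar fun w => (h w : ℂ)

/-- `∂∂̄h` for a real-valued `h`. -/
noncomputable def wlapR (h : ℂ → ℝ) : ℂ → ℂ := wdz (wdzbarR h)

/-- The numerator `h·∂∂̄h − ∂h·∂̄h` of (−1/2 times) the Gaussian curvature of `h|dz|²`. -/
noncomputable def curvNum (h : ℂ → ℝ) (z : ℂ) : ℂ :=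
  (h z : ℂ) * wlapR h z - wdzR h z * wdzbarR h z

/-- The Gaussian curvature `K = −2(h·∂∂̄h − ∂h·∂̄h)/h³` of the conformal metric `h|dz|²`. -/
noncomputable def gaussCurv (h : ℂ → ℝ) (z : ℂ) : ℂ :=
  -2 * curvNum h z / (h z : ℂ) ^ 3

/-!
Near `p` the density has the form `h = |a|² G + 1`, where `a = f'` is holomorphic and `G` is
smooth because `u(t) = 1 / (t · L(t))`, with `L` the analytic extension of `log t / (t - 1)`
across `t = 1`. As `∂̄` passes through holomorphic factors, `∂̄h = a · ∂̄(ā G)`. At a zero of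
`a` this vanishes, so the curvature reduces to `-2 ∂∂̄h / h²` there, and the only surviving term
of the product rule is `∂∂̄h = a' · ∂̄(ā G) = |a'|² G`.
-/

open scoped ComplexConjugate

section Density

lemma analyticAt_dslope {𝕜 E : Type*} [NontriviallyNormedField 𝕜] [NormedAddCommGroup E]
    [NormedSpace 𝕜 E] {f : 𝕜 → E} {x y : 𝕜} (hx : AnalyticAt 𝕜 f x) (hy : AnalyticAt 𝕜 f y) :
    AnalyticAt 𝕜 (dslope f x) y := by
  rcases eq_or_ne y x with rfl | hne
  · obtain ⟨q, hq⟩ := hx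
    exact ⟨_, hq.has_fpower_series_dslope_fslope⟩
  · have hslope : AnalyticAt 𝕜 (slope f x) y :=
      ((analyticAt_id.sub analyticAt_const).inv (sub_ne_zero.2 hne)).smul (hy.sub analyticAt_const)
    exact hslope.congr (dslope_eventuallyEq_slope_of_ne f hne).symm

lemma dslope_log_one_ne_zero {t : ℝ} (ht : 0 < t) : dslope Real.log 1 t ≠ 0 := by
  rcases eq_or_ne t 1 with rfl | h
  · simp
  · simpa [dslope_of_ne _ h, slope, sub_eq_zero, h] using Real.log_ne_zero_of_pos_of_ne_one ht h

lemma u_eq_inv_mul_dslope_log : u = fun t ↦ (t * dslope Real.log 1 t)⁻¹ := by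
  funext t
  rcases eq_or_ne t 1 with rfl | h
  · simp [u]
  · simp [u, h, dslope_of_ne _ h, slope_def_field, div_eq_mul_inv, mul_comm, mul_left_comm]

lemma analyticAt_u {t : ℝ} (ht : 0 < t) : AnalyticAt ℝ u t := by
  rw [u_eq_inv_mul_dslope_log]
  exact (analyticAt_id.mul (analyticAt_dslope (analyticAt_log one_pos) (analyticAt_log ht))).inv
    (mul_ne_zero ht.ne' (dslope_log_one_ne_zero ht))

lemma contDiffAt_norm_sq_mul_u_sq {E F : Type*} [NormedAddCommGroup E] [NormedSpace ℝ E]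
    [NormedAddCommGroup F] [InnerProductSpace ℝ F] {n : WithTop ℕ∞} {f : E → F} {x : E}
    (hf : ContDiffAt ℝ n f x) (hx : f x ≠ 0) :
    ContDiffAt ℝ n (fun y ↦ ‖f y‖ ^ 2 * u (‖f y‖ ^ 2) ^ 2) x := by
  have hsq : ContDiffAt ℝ n (fun y ↦ ‖f y‖ ^ 2) x := hf.norm_sq ℝ
  have hu : ContDiffAt ℝ n u (‖f x‖ ^ 2) := (analyticAt_u (by positivity)).contDiffAt
  exact hsq.mul ((hu.comp x hsq).pow 2)

end Density

section Wirtinger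

variable {a b : ℂ → ℂ} {z : ℂ}

lemma wdz_mul (ha : DifferentiableAt ℝ a z) (hb : DifferentiableAt ℝ b z) :
    wdz (fun w ↦ a w * b w) z = a z * wdz b z + b z * wdz a z := by
  simp only [wdz, fderiv_fun_mul ha hb, add_apply, smul_apply, smul_eq_mul]
  ring

lemma wdzbar_mul (ha : DifferentiableAt ℝ a z) (hb : DifferentiableAt ℝ b z) :
    wdzbar (fun w ↦ a w * b w) z = a z * wdzbar b z + b z * wdzbar a z := by
  simp only [wdzbar, fderiv_fun_mul ha hb, add_apply, smul_apply, smul_eq_mul]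
  ring

lemma wdzbar_add_const (a : ℂ → ℂ) (c z : ℂ) : wdzbar (fun w ↦ a w + c) z = wdzbar a z := by
  simp only [wdzbar, fderiv_add_const]

lemma wdzbar_conj (a : ℂ → ℂ) (z : ℂ) : wdzbar (fun w ↦ conj (a w)) z = conj (wdz a z) := by
  have hfderiv : fderiv ℝ (fun w ↦ conj (a w)) z = (conjCLE : ℂ →L[ℝ] ℂ).comp (fderiv ℝ a z) :=
    conjCLE.comp_fderiv
  simp [wdzbar, wdz, hfderiv, map_ofNat]

lemma wdz_congr_of_eventuallyEq (h : a =ᶠ[𝓝 z] b) : wdz a z = wdz b z := by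
  simp only [wdz, h.fderiv_eq]

lemma fderiv_real_apply_eq_mul_deriv (ha : DifferentiableAt ℂ a z) (v : ℂ) :
    fderiv ℝ a z v = v * deriv a z := by
  simp [ha.fderiv_restrictScalars ℝ]

lemma wdz_eq_deriv (ha : DifferentiableAt ℂ a z) : wdz a z = deriv a z := by
  simp only [wdz, fderiv_real_apply_eq_mul_deriv ha]
  linear_combination (-deriv a z / 2) * I_mul_I

lemma wdzbar_eq_zero (ha : DifferentiableAt ℂ a z) : wdzbar a z = 0 := by
  simp only [wdzbar, fderiv_real_apply_eq_mul_deriv ha]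
  linear_combination (deriv a z / 2) * I_mul_I

lemma wdzbar_mul_of_differentiableAt (ha : DifferentiableAt ℂ a z) (hb : DifferentiableAt ℝ b z) :
    wdzbar (fun w ↦ a w * b w) z = a z * wdzbar b z := by
  rw [wdzbar_mul (ha.restrictScalars ℝ) hb, wdzbar_eq_zero ha, mul_zero, add_zero]

lemma differentiableAt_wdzbar (hb : ContDiffAt ℝ 2 b z) : DifferentiableAt ℝ (wdzbar b) z := by
  have hfderiv : DifferentiableAt ℝ (fderiv ℝ b) z :=
    (hb.fderiv_right (m := 1) (by norm_num)).differentiableAt one_ne_zero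
  unfold wdzbar
  fun_prop

lemma wdz_wdzbar_mul_of_eq_zero (ha : AnalyticAt ℂ a z) (hb : ContDiffAt ℝ 2 b z) (hz : a z = 0) :
    wdz (wdzbar fun w ↦ a w * b w) z = wdzbar b z * deriv a z := by
  have hwdzbar : (wdzbar fun w ↦ a w * b w) =ᶠ[𝓝 z] fun w ↦ a w * wdzbar b w := by
    filter_upwards [ha.eventually_analyticAt, hb.eventually (by simp)] with w haw hbw
    exact wdzbar_mul_of_differentiableAt haw.differentiableAt (hbw.differentiableAt two_ne_zero)
  rw [wdz_congr_of_eventuallyEq hwdzbar,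
    wdz_mul (ha.differentiableAt.restrictScalars ℝ) (differentiableAt_wdzbar hb),
    wdz_eq_deriv ha.differentiableAt, hz, zero_mul, zero_add]

end Wirtinger

section Curvature

variable {a : ℂ → ℂ} {G h : ℂ → ℝ} {p : ℂ}

lemma gaussCurv_of_wdzbarR_eq_zero (hp : wdzbarR h p = 0) :
    gaussCurv h p = -2 * wlapR h p / (h p : ℂ) ^ 2 := by
  simp only [gaussCurv, curvNum, hp, mul_zero, sub_zero]
  field_simp

lemma ofReal_norm_sq_mul_add (x : ℂ) (s c : ℝ) :
    ((‖x‖ ^ 2 * s + c : ℝ) : ℂ) = x * (conj x * s) + c := by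
  rw [← mul_assoc, mul_conj']
  push_cast
  rfl

lemma wdzbarR_norm_sq_mul_add_const (a : ℂ → ℂ) (G : ℂ → ℝ) (c : ℝ) :
    wdzbarR (fun z ↦ ‖a z‖ ^ 2 * G z + c) = wdzbar fun z ↦ a z * (conj (a z) * G z) := by
  funext z
  simp only [wdzbarR, ofReal_norm_sq_mul_add, wdzbar_add_const]

lemma contDiffAt_conj_mul_ofReal {n : WithTop ℕ∞} (ha : ContDiffAt ℝ n a p)
    (hG : ContDiffAt ℝ n G p) : ContDiffAt ℝ n (fun z ↦ conj (a z) * (G z : ℂ)) p :=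
  (conjCLE.contDiff.contDiffAt.comp p ha).mul (ofRealCLM.contDiff.contDiffAt.comp p hG)

lemma wdzbar_conj_mul_ofReal_of_eq_zero (ha : DifferentiableAt ℂ a p)
    (hG : DifferentiableAt ℝ G p) (hp : a p = 0) :
    wdzbar (fun z ↦ conj (a z) * (G z : ℂ)) p = G p * conj (deriv a p) := by
  have hconj : DifferentiableAt ℝ (fun z ↦ conj (a z)) p :=
    conjCLE.differentiableAt.comp p (ha.restrictScalars ℝ)
  have hofReal : DifferentiableAt ℝ (fun z ↦ (G z : ℂ)) p :=
    ofRealCLM.differentiableAt.comp p hG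
  rw [wdzbar_mul hconj hofReal, wdzbar_conj, wdz_eq_deriv ha, hp, map_zero, zero_mul, zero_add]

lemma wdzbarR_norm_sq_mul_add_const_eq_zero (ha : DifferentiableAt ℂ a p)
    (hG : DifferentiableAt ℝ G p) (c : ℝ) (hp : a p = 0) :
    wdzbarR (fun z ↦ ‖a z‖ ^ 2 * G z + c) p = 0 := by
  have hb : DifferentiableAt ℝ (fun z ↦ conj (a z) * (G z : ℂ)) p :=
    (conjCLE.differentiableAt.comp p (ha.restrictScalars ℝ)).mul
      (ofRealCLM.differentiableAt.comp p hG)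
  rw [wdzbarR_norm_sq_mul_add_const, wdzbar_mul_of_differentiableAt ha hb, hp, zero_mul]

lemma wlapR_norm_sq_mul_add_const_of_eq_zero (ha : AnalyticAt ℂ a p) (hG : ContDiffAt ℝ 2 G p)
    (c : ℝ) (hp : a p = 0) :
    wlapR (fun z ↦ ‖a z‖ ^ 2 * G z + c) p = ((‖deriv a p‖ ^ 2 * G p : ℝ) : ℂ) := by
  have hb : ContDiffAt ℝ 2 (fun z ↦ conj (a z) * (G z : ℂ)) p :=
    contDiffAt_conj_mul_ofReal (ha.contDiffAt.restrict_scalars ℝ) hG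
  rw [wlapR, wdzbarR_norm_sq_mul_add_const, wdz_wdzbar_mul_of_eq_zero ha hb hp,
    wdzbar_conj_mul_ofReal_of_eq_zero ha.differentiableAt (hG.differentiableAt two_ne_zero) hp,
    mul_assoc, conj_mul', mul_comm]
  push_cast
  rfl

-- For `c = 0` both sides are `0`, by the convention `x / 0 = 0`.
theorem gaussCurv_norm_sq_mul_add_const_of_eq_zero (ha : AnalyticAt ℂ a p)
    (hG : ContDiffAt ℝ 2 G p) (c : ℝ) (hp : a p = 0) :
    gaussCurv (fun z ↦ ‖a z‖ ^ 2 * G z + c) p =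
      ((-2 * ‖deriv a p‖ ^ 2 * G p / c ^ 2 : ℝ) : ℂ) := by
  rw [gaussCurv_of_wdzbarR_eq_zero (wdzbarR_norm_sq_mul_add_const_eq_zero ha.differentiableAt
    (hG.differentiableAt two_ne_zero) c hp), wlapR_norm_sq_mul_add_const_of_eq_zero ha hG c hp]
  simp [hp, mul_assoc]

end Curvature

theorem stmt7_general {f : ℂ → ℂ} {p : ℂ} (hf : AnalyticAt ℂ f p) (hfp : f p ≠ 0)
    (hf'p : deriv f p = 0) :
    gaussCurv (fun z =>
        ‖deriv f z‖ ^ 2 * (1 + ‖f z‖ ^ 2 * u (‖f z‖ ^ 2) ^ 2) + 1) p =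
      ((-2 * ‖deriv (deriv f) p‖ ^ 2 *
        (1 + ‖f p‖ ^ 2 * u (‖f p‖ ^ 2) ^ 2) : ℝ) : ℂ) ∧
    (gaussCurv (fun z =>
        ‖deriv f z‖ ^ 2 * (1 + ‖f z‖ ^ 2 * u (‖f z‖ ^ 2) ^ 2) + 1) p = 0 ↔
      deriv (deriv f) p = 0) := by
  have hG : ContDiffAt ℝ 2 (fun z ↦ 1 + ‖f z‖ ^ 2 * u (‖f z‖ ^ 2) ^ 2) p :=
    contDiffAt_const.add (contDiffAt_norm_sq_mul_u_sq (hf.contDiffAt.restrict_scalars ℝ) hfp)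
  have hcurv := gaussCurv_norm_sq_mul_add_const_of_eq_zero hf.deriv hG 1 hf'p
  rw [one_pow, div_one] at hcurv
  have hpos : 1 + ‖f p‖ ^ 2 * u (‖f p‖ ^ 2) ^ 2 ≠ 0 := by positivity
  refine ⟨hcurv, ?_⟩
  rw [hcurv, ofReal_eq_zero]
  simp [hpos]

/-- for a nonconstant entire `f` and `p` with `f(p) ≠ 0`, `f′(p) = 0`,
the Gaussian curvature of `h|dz|²` at `p` equals `−2|f″(p)|²(1 + |f(p)|²u(|f(p)|²)²)`;
in particular it vanishes iff `f″(p) = 0`. -/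
theorem stmt7 (f : ℂ → ℂ) (hf : Differentiable ℂ f)
    (hfnc : ¬ ∃ c : ℂ, ∀ z, f z = c)
    (p : ℂ) (hfp : f p ≠ 0) (hf'p : deriv f p = 0) :
    gaussCurv (fun z =>
        ‖deriv f z‖ ^ 2 * (1 + ‖f z‖ ^ 2 * u (‖f z‖ ^ 2) ^ 2) + 1) p =
      ((-2 * ‖deriv (deriv f) p‖ ^ 2 *
        (1 + ‖f p‖ ^ 2 * u (‖f p‖ ^ 2) ^ 2) : ℝ) : ℂ) ∧
    (gaussCurv (fun z =>
        ‖deriv f z‖ ^ 2 * (1 + ‖f z‖ ^ 2 * u (‖f z‖ ^ 2) ^ 2) + 1) p = 0 ↔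
      deriv (deriv f) p = 0) :=
  stmt7_general (hf.analyticAt p) hfp hf'p
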